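/- For every classifier h ∈ H and every auxiliary classifier h′ ∈ H, the pointwise bound underlying Proposition 1 holds: e_T(h) ≤ e_S(h) + d_{h,H}(S,T) + e_S(h′) + e_T(h′). -/

import Mathlib

/-! `Gam` satisfies the triangle inequality on the simplex (`Gam_triangle`), and integrating it gives
the triangle inequality for `dis` (`dis_triangle`). Hence
`dis T h yT ≤ dis T h' h + dis T h' yT` and `dis S h' h ≤ dis S h yS + dis S h' yS`, while
`dis T h' h - dis S h' h` is one of the values whose supremum is `ddd H h S T`; the supremum is
a genuine one because `dis` takes values in `[0, 1]`. Adding the three gives the bound.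
-/

open MeasureTheory

/-- Classifier determinacy disparity Γ(p,q) = ∑_{m≠n} p_m q_n = 1 − ∑_k p_k q_k. -/
noncomputable def Gam {K : ℕ} (p q : Fin K → ℝ) : ℝ := 1 - ∑ k, p k * q k

/-- Membership in the probability simplex Δ_K. -/
def inSimplex {K : ℕ} (p : Fin K → ℝ) : Prop := (∀ k, 0 ≤ p k) ∧ ∑ k, p k = 1

/-- Expected determinacy disparity dis_D(h₁,h₂) = ∫ Γ(h₁(x), h₂(x)) dD(x). -/
noncomputable def dis {X : Type*} [MeasurableSpace X] {K : ℕ}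
    (D : Measure X) (h₁ h₂ : X → Fin K → ℝ) : ℝ :=
  ∫ x, Gam (h₁ x) (h₂ x) ∂D

/-- Determinacy disparity discrepancy d_{h,H}(P,Q) = sup_{h'∈H} (dis_Q(h',h) − dis_P(h',h)). -/
noncomputable def ddd {X : Type*} [MeasurableSpace X] {K : ℕ}
    (H : Set (X → Fin K → ℝ)) (h : X → Fin K → ℝ) (P Q : Measure X) : ℝ :=
  sSup {r | ∃ h' ∈ H, r = dis Q h' h - dis P h' h}

lemma inSimplex_le_one {K : ℕ} {p : Fin K → ℝ} (hp : inSimplex p) (k : Fin K) : p k ≤ 1 :=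
  hp.2 ▸ Finset.single_le_sum (fun i _ => hp.1 i) (Finset.mem_univ k)

/-- The triangle inequality for `Gam`. It amounts to `p·r + r·q ≤ 1 + p·q`, which follows by
weighting `p k + q k ≤ 1 + p k * q k` with `r k` and summing, as `r k ≤ 1` and `∑ r k = 1`. -/
lemma Gam_triangle {K : ℕ} {p q r : Fin K → ℝ} (hp : inSimplex p) (hq : inSimplex q)
    (hr : inSimplex r) : Gam p q ≤ Gam p r + Gam r q := by
  have key : ∑ k, (p k * r k + r k * q k) ≤ ∑ k, (r k + p k * q k) := by
    refine Finset.sum_le_sum fun k _ => ?_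
    have hp1 := inSimplex_le_one hp k
    have hq1 := inSimplex_le_one hq k
    have hr1 := inSimplex_le_one hr k
    have h1 := mul_nonneg (hr.1 k) (mul_nonneg (sub_nonneg.2 hp1) (sub_nonneg.2 hq1))
    have h2 := mul_nonneg (sub_nonneg.2 hr1) (mul_nonneg (hp.1 k) (hq.1 k))
    nlinarith
  rw [Finset.sum_add_distrib, Finset.sum_add_distrib, hr.2] at key
  unfold Gam
  linarith

lemma Gam_comm {K : ℕ} (p q : Fin K → ℝ) : Gam p q = Gam q p := by
  simp only [Gam, mul_comm]

lemma Gam_nonneg {K : ℕ} {p q : Fin K → ℝ} (hp : inSimplex p) (hq : inSimplex q) :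
    0 ≤ Gam p q := by
  have : ∑ k, p k * q k ≤ ∑ k, p k :=
    Finset.sum_le_sum fun k _ => mul_le_of_le_one_right (hp.1 k) (inSimplex_le_one hq k)
  rw [hp.2] at this
  unfold Gam
  linarith

lemma Gam_le_one {K : ℕ} {p q : Fin K → ℝ} (hp : inSimplex p) (hq : inSimplex q) :
    Gam p q ≤ 1 := by
  have : 0 ≤ ∑ k, p k * q k := Finset.sum_nonneg fun k _ => mul_nonneg (hp.1 k) (hq.1 k)
  unfold Gam
  linarith

section dis

variable {X : Type*} [MeasurableSpace X] {K : ℕ} {f g u : X → Fin K → ℝ}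

lemma integrable_Gam (D : Measure X) [IsProbabilityMeasure D]
    (hf : Measurable f) (hg : Measurable g)
    (hfs : ∀ x, inSimplex (f x)) (hgs : ∀ x, inSimplex (g x)) :
    Integrable (fun x => Gam (f x) (g x)) D := by
  have hm : Measurable fun x => Gam (f x) (g x) := by
    unfold Gam
    fun_prop
  refine Integrable.of_bound hm.aestronglyMeasurable 1 (ae_of_all _ fun x => ?_)
  rw [Real.norm_eq_abs, abs_of_nonneg (Gam_nonneg (hfs x) (hgs x))]
  exact Gam_le_one (hfs x) (hgs x)

lemma dis_comm (D : Measure X) (f g : X → Fin K → ℝ) : dis D f g = dis D g f := by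
  simp only [dis, Gam_comm]

lemma dis_triangle (D : Measure X) [IsProbabilityMeasure D]
    (hf : Measurable f) (hg : Measurable g) (hu : Measurable u)
    (hfs : ∀ x, inSimplex (f x)) (hgs : ∀ x, inSimplex (g x)) (hus : ∀ x, inSimplex (u x)) :
    dis D f g ≤ dis D f u + dis D u g := by
  have i1 := integrable_Gam D hf hu hfs hus
  have i2 := integrable_Gam D hu hg hus hgs
  unfold dis
  rw [← integral_add i1 i2]
  exact integral_mono (integrable_Gam D hf hg hfs hgs) (i1.add i2)
    fun x => Gam_triangle (hfs x) (hgs x) (hus x)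

lemma dis_nonneg (D : Measure X)
    (hfs : ∀ x, inSimplex (f x)) (hgs : ∀ x, inSimplex (g x)) : 0 ≤ dis D f g :=
  integral_nonneg fun x => Gam_nonneg (hfs x) (hgs x)

lemma dis_le_one (D : Measure X) [IsProbabilityMeasure D]
    (hf : Measurable f) (hg : Measurable g)
    (hfs : ∀ x, inSimplex (f x)) (hgs : ∀ x, inSimplex (g x)) : dis D f g ≤ 1 := by
  have := integral_mono (integrable_Gam D hf hg hfs hgs) (integrable_const (1 : ℝ))
    fun x => Gam_le_one (hfs x) (hgs x)
  simpa [dis] using this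

end dis

/-- pointwise bound e_T(h) ≤ e_S(h) + d_{h,H}(S,T) + e_S(h') + e_T(h')
for every auxiliary classifier h' ∈ H. -/
theorem target_error_pointwise_bound {X : Type*} [MeasurableSpace X] (K : ℕ) (hK : 1 ≤ K)
    (H : Set (X → Fin K → ℝ)) (hHne : H.Nonempty)
    (hHm : ∀ h'' ∈ H, Measurable h'') (hHs : ∀ h'' ∈ H, ∀ x, inSimplex (h'' x))
    (S T : Measure X) [IsProbabilityMeasure S] [IsProbabilityMeasure T]
    (yS yT : X → Fin K → ℝ) (hyS : Measurable yS) (hyT : Measurable yT)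
    (hySs : ∀ x, inSimplex (yS x)) (hyTs : ∀ x, inSimplex (yT x))
    (h : X → Fin K → ℝ) (hh : h ∈ H)
    (h' : X → Fin K → ℝ) (hh' : h' ∈ H) :
    dis T h yT ≤ dis S h yS + ddd H h S T + (dis S h' yS + dis T h' yT) := by
  have hT := dis_triangle T (hHm h hh) hyT (hHm h' hh') (hHs h hh) hyTs (hHs h' hh')
  have hS := dis_triangle S (hHm h' hh') (hHm h hh) hyS (hHs h' hh') (hHs h hh) hySs
  rw [dis_comm T h h'] at hT
  rw [dis_comm S yS h] at hS
  have hsup : dis T h' h - dis S h' h ≤ ddd H h S T := by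
    refine le_csSup ⟨1, ?_⟩ ⟨h', hh', rfl⟩
    rintro r ⟨g, hg, rfl⟩
    have h1 := dis_le_one T (hHm g hg) (hHm h hh) (hHs g hg) (hHs h hh)
    have h0 := dis_nonneg S (hHs g hg) (hHs h hh)
    linarith
  linarith
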